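/- Let f be a positive integer and p a prime with p > f + 1. Then for every n ≥ 2f, Ψ_{n,f}^p equals the sum, over all partitions λ = (λ_1, ..., λ_k) of f with λ_1 ≥ ... ≥ λ_k, of Ψ_{n-f}^p(λ_1, ..., λ_k). -/

import Mathlib

/-- `℧_1(H) = ⟨h^p : h ∈ H⟩` for a subgroup `H`. -/
def MhoOne (p : ℕ) {P : Type} [Group P] (H : Subgroup P) : Subgroup P :=
  Subgroup.closure {y : P | ∃ x ∈ H, y = x ^ p}

/-- A `p`-group `P` is regular if for all `x y : P` there is
`z ∈ ℧_1(γ_2(⟨x,y⟩))` with `x^p * y^p = (x*y)^p * z`. -/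
def IsRegularPGroup (p : ℕ) (P : Type) [Group P] : Prop :=
  ∀ x y : P,
    ∃ z ∈ MhoOne p ⁅Subgroup.closure {x, y}, Subgroup.closure {x, y}⁆,
      x ^ p * y ^ p = (x * y) ^ p * z

/-- `Ω_i(P) = ⟨x : x^(p^i) = 1⟩`. -/
def OmegaSubgroup (p : ℕ) (P : Type) [Group P] (i : ℕ) : Subgroup P :=
  Subgroup.closure {x : P | x ^ p ^ i = 1}

/-- `ω_i(P)`, defined by `p ^ ω_i(P) = |Ω_i(P)/Ω_{i-1}(P)|`. -/
noncomputable def omegaInv (p : ℕ) (P : Type) [Group P] (i : ℕ) : ℕ :=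
  ((OmegaSubgroup p P (i - 1)).relIndex (OmegaSubgroup p P i)).factorization p

/-- `μ_j(P)` (for `j ≥ 1`): the dual partition of `(ω_1(P), ω_2(P), ...)`;
the type invariants of `P` are `μ_1(P) ≥ μ_2(P) ≥ ...`. -/
noncomputable def muInv (p : ℕ) (P : Type) [Group P] (j : ℕ) : ℕ :=
  Nat.card {i : ℕ // 1 ≤ i ∧ j ≤ omegaInv p P i}

/-- `P` has type invariants given by the list `l`. -/
def HasTypeInvariants (p : ℕ) (P : Type) [Group P] (l : List ℕ) : Prop :=
  ∀ i : ℕ, muInv p P (i + 1) = l.getD i 0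

/-- The multiplication extracted from a group structure. -/
def mulOfGroup (G : Type) (s : Group G) : Mul G := by letI := s; infer_instance

/-- The number of isomorphism classes of groups of order `N` whose group structure
satisfies the predicate `Q`. -/
noncomputable def groupClassCount (N : ℕ) (Q : Group (Fin N) → Prop) : ℕ :=
  Nat.card (Quot fun s t : {s : Group (Fin N) // Q s} =>
    Nonempty (@MulEquiv (Fin N) (Fin N) (mulOfGroup _ s.1) (mulOfGroup _ t.1)))

/-- `Ψ_e^p(λ)`: the number of isomorphism classes of regular `p`-groups of type
`(e, λ_1, ..., λ_k)`; such a group has order `p ^ (e + λ_1 + ... + λ_k)`. -/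
noncomputable def PsiType (p e : ℕ) (l : List ℕ) : ℕ :=
  groupClassCount (p ^ (e + l.sum)) fun s =>
    letI := s
    IsRegularPGroup p (Fin (p ^ (e + l.sum))) ∧
      HasTypeInvariants p (Fin (p ^ (e + l.sum))) (e :: l)

/-- `Ψ_{n,f}^p`: the number of isomorphism classes of groups of order `p ^ n`
with coexponent `f`, i.e. with exponent `p ^ e` where `n - e = f`. -/
noncomputable def PsiCoexp (p n f : ℕ) : ℕ :=
  groupClassCount (p ^ n) fun s =>
    letI := s
    ∃ e : ℕ, Monoid.exponent (Fin (p ^ n)) = p ^ e ∧ n - e = f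

/-!
A group of order `p ^ n` and exponent `p ^ (n - f)` has a cyclic subgroup `A` of index `p ^ f`,
and this forces it to be regular when `f + 1 < p`. Indeed, regularity of `⟨x, y⟩ = G` may be
tested in the quotient by `℧₁(γ₂(G))`, where `γ₂` has exponent `p`. Then `|A ⊓ γ₂| ≤ p`, so
`|γ₂| ≤ p ^ f`, the nilpotency class is at most `f + 1 < p`, and `x ↦ x ^ p` is a homomorphism.
For the last point, `n ↦ x ^ n * y ^ n * ((x * y) ^ n)⁻¹` is a polynomial sequence in the sense of
Lazard and Leibman with respect to the lower central series: modulo binomial sequences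
`n ↦ a ^ n.choose k` with `2 ≤ k < p` and `a ∈ γ₂`, which take the value `1` at `p`, its value at
`p` lies in `γ_p = 1`.

In a regular `p`-group `Ω_i` is exactly the set of solutions of `x ^ p ^ i = 1`, so `ω_i > 0`
precisely when `1 ≤ i ≤ e`, where `p ^ e` is the exponent: `μ_1 = e`, and the remaining type
invariants form a partition of `f`. Hence the groups of coexponent `f` are the regular groups of
type `(n - f, λ)`, `λ` a partition of `f`, and the type is an isomorphism invariant.
-/

/-- A descending chain of subgroups with `⁅F i, F j⁆ ≤ F (i + j)`, indexed from `0` so that `F 0`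
normalizes every term. -/
structure CommutatorFiltration (G : Type*) [Group G] where
  term : ℕ → Subgroup G
  antitone_term : Antitone term
  commutator_term_le : ∀ i j, ⁅term i, term j⁆ ≤ term (i + j)

namespace CommutatorFiltration

variable {G : Type*} [Group G] (F : CommutatorFiltration G)

open scoped commutatorElement in
lemma commutator_mem {i j : ℕ} {a b : G} (ha : a ∈ F.term i) (hb : b ∈ F.term j) :
    ⁅a, b⁆ ∈ F.term (i + j) :=
  F.commutator_term_le i j (Subgroup.commutator_mem_commutator ha hb)

lemma mem_term_of_le {i j : ℕ} {a : G} (hij : i ≤ j) (ha : a ∈ F.term j) : a ∈ F.term i :=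
  F.antitone_term hij ha

lemma conj_mem {i k : ℕ} {w u : G} (hw : w ∈ F.term i) (hu : u ∈ F.term k) :
    w * u * w⁻¹ ∈ F.term k := by
  have hcomm := F.mem_term_of_le (Nat.le_add_left k i) (F.commutator_mem hw hu)
  simpa [commutatorElement_def] using mul_mem hcomm hu

/-- The pointwise filtration of a group of functions. -/
def pi (ι : Type*) : CommutatorFiltration (ι → G) where
  term k := Subgroup.pi Set.univ fun _ => F.term k
  antitone_term _ _ hij _ hg n hn := F.antitone_term hij (hg n hn)
  commutator_term_le _ _ := Subgroup.commutator_le.mpr fun _ hg _ hh n hn =>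
    F.commutator_mem (hg n hn) (hh n hn)

/-- The termwise intersection of a family of filtrations. -/
def iInf {ι : Type*} (E : ι → CommutatorFiltration G) : CommutatorFiltration G where
  term k := ⨅ i, (E i).term k
  antitone_term _ _ hij := iInf_mono fun i => (E i).antitone_term hij
  commutator_term_le _ _ := le_iInf fun i =>
    (Subgroup.commutator_mono (iInf_le _ i) (iInf_le _ i)).trans ((E i).commutator_term_le _ _)

open scoped commutatorElement in
/-- The inductive step of the Lazard–Leibman theorem: for an endomorphism `T`, the elements of
degree `k` whose difference `g⁻¹ * T g` has degree `k + 1` again form a filtration. -/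
def differenceStep (T : G →* G) : CommutatorFiltration G where
  term k :=
    { carrier := {g | g ∈ F.term k ∧ g⁻¹ * T g ∈ F.term (k + 1)}
      one_mem' := by simp
      mul_mem' := fun {g h} ⟨hg, hdg⟩ ⟨hh, hdh⟩ => by
        refine ⟨mul_mem hg hh, ?_⟩
        have hprod : (g * h)⁻¹ * T (g * h) = h⁻¹ * (g⁻¹ * T g) * h⁻¹⁻¹ * (h⁻¹ * T h) := by
          rw [map_mul]; group
        rw [hprod]
        exact mul_mem (F.conj_mem (inv_mem hh) hdg) hdh
      inv_mem' := fun {g} ⟨hg, hdg⟩ => by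
        refine ⟨inv_mem hg, ?_⟩
        have hinv : g⁻¹⁻¹ * T g⁻¹ = g * (g⁻¹ * T g)⁻¹ * g⁻¹ := by
          rw [map_inv]; group
        rw [hinv]
        exact F.conj_mem hg (inv_mem hdg) }
  antitone_term _ _ hij _ hg :=
    ⟨F.mem_term_of_le hij hg.1, F.mem_term_of_le (by omega) hg.2⟩
  commutator_term_le i j := Subgroup.commutator_le.mpr fun g ⟨hg, hdg⟩ h ⟨hh, hdh⟩ => by
    refine ⟨F.commutator_mem hg hh, ?_⟩
    have hTh : T h ∈ F.term j := by
      simpa using mul_mem hh (F.mem_term_of_le (Nat.le_succ j) hdh)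
    have hcomm : ⁅g, h⁆⁻¹ * T ⁅g, h⁆ =
        ⁅g, h⁆⁻¹ * (g * ⁅g⁻¹ * T g, T h⁆ * g⁻¹) * ⁅g, h⁆⁻¹⁻¹ * (h * ⁅g, h⁻¹ * T h⁆ * h⁻¹) := by
      simp only [commutatorElement_def, map_mul, map_inv]; group
    rw [hcomm]
    refine mul_mem (F.conj_mem (inv_mem (F.commutator_mem hg hh)) (F.conj_mem hg ?_))
      (F.conj_mem hh (F.commutator_mem hg hdh :))
    simpa only [add_right_comm] using F.commutator_mem hdg hTh

/-- The endomorphism `g ↦ g (· + 1)` of the group of sequences. -/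
def shift (G : Type*) [Group G] : (ℕ → G) →* (ℕ → G) where
  toFun g n := g (n + 1)
  map_one' := rfl
  map_mul' _ _ := rfl

/-- The sequences of degree `k` whose `j`-th differences have degree `k + j`, for all `j ≤ m`. -/
def polynomialUpTo : ℕ → CommutatorFiltration (ℕ → G)
  | 0 => F.pi ℕ
  | m + 1 => (polynomialUpTo m).differenceStep (shift G)

/-- The filtration of the group of sequences by polynomial sequences: those whose `j`-th
differences take their values in `F.term (k + j)`, for all `j`. -/
def polynomial : CommutatorFiltration (ℕ → G) :=
  iInf F.polynomialUpTo

variable {F}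

lemma mem_polynomial_iff {k : ℕ} {g : ℕ → G} :
    g ∈ F.polynomial.term k ↔
      (∀ n, g n ∈ F.term k) ∧ g⁻¹ * shift G g ∈ F.polynomial.term (k + 1) := by
  simp only [polynomial, iInf, Subgroup.mem_iInf]
  constructor
  · exact fun hg => ⟨fun n => hg 0 n trivial, fun m => (hg (m + 1)).2⟩
  · rintro ⟨hval, hdiff⟩ m
    induction m with
    | zero => exact fun n _ => hval n
    | succ m ih => exact ⟨ih, hdiff m⟩

lemma binomial_mem_polynomial {i k : ℕ} {a : G} (ha : a ∈ F.term (k + i)) :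
    (fun n => a ^ n.choose i) ∈ F.polynomial.term k := by
  induction i generalizing k with
  | zero =>
    refine mem_polynomial_iff.mpr ⟨fun n => by simpa using ha, ?_⟩
    have hdiff : (fun n => a ^ n.choose 0)⁻¹ * shift G (fun n => a ^ n.choose 0) = 1 := by
      ext n; simp [shift]
    exact hdiff ▸ one_mem _
  | succ i ih =>
    refine mem_polynomial_iff.mpr
      ⟨fun n => pow_mem (F.mem_term_of_le (Nat.le_add_right _ _) ha) _, ?_⟩
    have hdiff : (fun n => a ^ n.choose (i + 1))⁻¹ * shift G (fun n => a ^ n.choose (i + 1)) =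
        fun n => a ^ n.choose i := by
      ext n
      change (a ^ n.choose (i + 1))⁻¹ * a ^ (n + 1).choose (i + 1) = a ^ n.choose i
      rw [Nat.choose_succ_succ', add_comm (n.choose i), pow_add, inv_mul_cancel_left]
    exact hdiff ▸ ih (by rwa [add_right_comm])

lemma pow_mem_polynomial (h1 : F.term 1 = ⊤) (a : G) : (a ^ ·) ∈ F.polynomial.term 0 := by
  simpa using binomial_mem_polynomial (F := F) (i := 1) (k := 0) (a := a) (by simp [h1])

lemma apply_mem_of_forall_lt_eq_one {j k : ℕ} {g : ℕ → G} (hg : g ∈ F.polynomial.term j)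
    (hone : ∀ i < k, g i = 1) : g k ∈ F.term (j + k) := by
  induction k generalizing j g with
  | zero => exact (mem_polynomial_iff.mp hg).1 0
  | succ k ih =>
    have hdiff := ih (mem_polynomial_iff.mp hg).2 fun i hi => by
      simp [shift, hone i (by omega), hone (i + 1) (by omega)]
    simpa [shift, hone k k.lt_succ_self, add_right_comm, add_assoc] using hdiff

section Prime

variable {p : ℕ}

-- Dividing by the binomial sequence `n ↦ g k ^ n.choose k` removes the value at `k`; it leaves the
-- value at `p` unchanged because `p ∣ p.choose k` for `0 < k < p`.
lemma exists_polynomial_forall_lt_eq_one (hp : p.Prime) (hpow : ∀ a ∈ F.term 2, a ^ p = 1)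
    {g : ℕ → G} (hg : g ∈ F.polynomial.term 0) (hone : ∀ i < 2, g i = 1) {k : ℕ} (hk : 2 ≤ k)
    (hkp : k ≤ p) :
    ∃ h ∈ F.polynomial.term 0, (∀ i < k, h i = 1) ∧ h p = g p := by
  induction k, hk using Nat.le_induction with
  | base => exact ⟨g, hg, hone, rfl⟩
  | succ k hk ih =>
    obtain ⟨h, hh, hhone, hhp⟩ := ih (by omega)
    have hhk := apply_mem_of_forall_lt_eq_one hh hhone
    refine ⟨h * (fun n => h k ^ n.choose k)⁻¹,
      mul_mem hh (inv_mem (binomial_mem_polynomial hhk)), fun i hi => ?_, ?_⟩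
    · obtain hik | rfl := Nat.lt_succ_iff_lt_or_eq.mp hi
      · simp [hhone i hik, Nat.choose_eq_zero_of_lt hik]
      · simp
    · obtain ⟨c, hc⟩ := hp.dvd_choose_self (k := k) (by omega) (by omega)
      have hpowk : h k ^ p.choose k = 1 := by
        rw [hc, pow_mul, hpow _ (F.mem_term_of_le (by omega) hhk), one_pow]
      simp [hpowk, hhp]

lemma pow_mul_pow_eq_mul_pow (hp : p.Prime) (hFp : F.term p = ⊥)
    (hpow : ∀ a ∈ F.term 2, a ^ p = 1) (h1 : F.term 1 = ⊤) (x y : G) :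
    x ^ p * y ^ p = (x * y) ^ p := by
  have hg : (x ^ ·) * (y ^ ·) * ((x * y) ^ ·)⁻¹ ∈ F.polynomial.term 0 :=
    mul_mem (mul_mem (pow_mem_polynomial h1 x) (pow_mem_polynomial h1 y))
      (inv_mem (pow_mem_polynomial h1 _))
  obtain ⟨h, hh, hone, hhp⟩ := exists_polynomial_forall_lt_eq_one hp hpow hg
    (fun i hi => by interval_cases i <;> simp) hp.two_le le_rfl
  have hbot : h p ∈ F.term p := by simpa using apply_mem_of_forall_lt_eq_one hh hone
  rw [hFp, Subgroup.mem_bot, hhp] at hbot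
  exact mul_inv_eq_one.mp hbot

end Prime

end CommutatorFiltration

section LowerCentralSeries

variable {G : Type*} [Group G]

lemma map_commutator_of_surjective {H : Type*} [Group H] {φ : G →* H}
    (hφ : Function.Surjective φ) : (commutator G).map φ = commutator H := by
  rw [map_commutator_eq, MonoidHom.range_eq_top.mpr hφ, commutator_def]

lemma commutator_le_of_closure_pair_eq_top {x y : G} (hxy : Subgroup.closure {x, y} = ⊤)
    {N : Subgroup G} [hN : N.Normal] (hx : x ∈ N) : commutator G ≤ N := by
  refine hN.commutator_le_of_self_sup_commutative_eq_top (H := Subgroup.zpowers y) ?_ inferInstance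
  rw [eq_top_iff, ← hxy, Subgroup.closure_le, Set.pair_subset_iff]
  exact ⟨Subgroup.mem_sup_left hx, Subgroup.mem_sup_right (Subgroup.mem_zpowers y)⟩

lemma commutator_commutator_le_of_rotate {H₁ H₂ H₃ N : Subgroup G} [N.Normal]
    (h₁ : ⁅⁅H₂, H₃⁆, H₁⁆ ≤ N) (h₂ : ⁅⁅H₃, H₁⁆, H₂⁆ ≤ N) : ⁅⁅H₁, H₂⁆, H₃⁆ ≤ N := by
  have hmap (H : Subgroup G) : H ≤ N ↔ H.map (QuotientGroup.mk' N) = ⊥ := by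
    rw [Subgroup.map_eq_bot_iff, QuotientGroup.ker_mk']
  simp only [hmap, Subgroup.map_commutator] at h₁ h₂ ⊢
  exact Subgroup.commutator_commutator_eq_bot_of_rotate h₁ h₂

lemma commutator_lowerCentralSeries_le (i j : ℕ) :
    ⁅(⊤ : Subgroup G).lowerCentralSeries i, (⊤ : Subgroup G).lowerCentralSeries j⁆ ≤
      (⊤ : Subgroup G).lowerCentralSeries (i + j + 1) := by
  induction j generalizing i with
  | zero => exact le_rfl
  | succ j ih =>
    rw [Subgroup.commutator_comm, Subgroup.lowerCentralSeries_succ]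
    refine commutator_commutator_le_of_rotate ?_ (Subgroup.commutator_mono (ih i) le_rfl)
    rw [Subgroup.commutator_comm ⊤, ← Subgroup.lowerCentralSeries_succ]
    exact (ih (i + 1)).trans_eq (by congr 1; omega)

/-- The lower central series as a filtration; Mathlib numbers it from `0`, so the term of degree
`i` is `lowerCentralSeries (i - 1)`, and degrees `0` and `1` both give the whole group. -/
def lowerCentralFiltration (G : Type*) [Group G] : CommutatorFiltration G where
  term i := (⊤ : Subgroup G).lowerCentralSeries (i - 1)
  antitone_term _ _ hij := Subgroup.lowerCentralSeries_antitone _ (by omega)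
  commutator_term_le i j := by
    rcases i with - | i
    · simpa using Subgroup.commutator_le_right ⊤ ((⊤ : Subgroup G).lowerCentralSeries (j - 1))
    rcases j with - | j
    · simpa using Subgroup.commutator_le_left ((⊤ : Subgroup G).lowerCentralSeries i) ⊤
    exact (commutator_lowerCentralSeries_le i j).trans_eq
      (congrArg (⊤ : Subgroup G).lowerCentralSeries (by omega))

lemma pow_mul_pow_eq_mul_pow_of_lowerCentralSeries_eq_bot {p : ℕ} (hp : p.Prime)
    (hbot : (⊤ : Subgroup G).lowerCentralSeries (p - 1) = ⊥)
    (hpow : ∀ a ∈ commutator G, a ^ p = 1) (x y : G) : x ^ p * y ^ p = (x * y) ^ p :=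
  CommutatorFiltration.pow_mul_pow_eq_mul_pow (F := lowerCentralFiltration G) hp hbot hpow rfl x y

variable [Group.IsNilpotent G]

lemma eq_bot_of_le_commutator_top {N : Subgroup G} (hN : N ≤ ⁅N, ⊤⁆) : N = ⊥ := by
  have hle (n : ℕ) : N ≤ (⊤ : Subgroup G).lowerCentralSeries n := by
    induction n with
    | zero => exact le_top
    | succ n ih => exact hN.trans (Subgroup.commutator_mono ih le_rfl)
  obtain ⟨n, hn⟩ := Subgroup.nilpotent_iff_lowerCentralSeries.mp ‹Group.IsNilpotent G›
  exact le_bot_iff.mp (hn ▸ hle n)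

lemma commutator_le_of_isCoatom {M : Subgroup G} (hM : IsCoatom M) : commutator G ≤ M := by
  have hMN : M.Normal :=
    Subgroup.NormalizerCondition.normal_of_coatom M Group.normalizerCondition_of_isNilpotent hM
  obtain ⟨x, -, hx⟩ := SetLike.exists_of_lt hM.lt_top
  refine hMN.commutator_le_of_self_sup_commutative_eq_top (H := Subgroup.zpowers x) ?_ inferInstance
  exact hM.2 _ (left_lt_sup.mpr fun h => hx (h (Subgroup.mem_zpowers x)))

lemma eq_top_of_sup_commutator_eq_top [IsCoatomic (Subgroup G)] {H : Subgroup G}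
    (hH : H ⊔ commutator G = ⊤) : H = ⊤ := by
  obtain htop | ⟨M, hM, hHM⟩ := eq_top_or_exists_le_coatom H
  · exact htop
  · exact absurd (top_le_iff.mp (hH ▸ sup_le hHM (commutator_le_of_isCoatom hM))) hM.1

end LowerCentralSeries

section CyclicSubgroupOfSmallIndex

variable {G : Type*} [Group G]

lemma isCyclic_subgroupOf (A H : Subgroup G) [IsCyclic A] : IsCyclic (A.subgroupOf H) :=
  isCyclic_of_injective (H.subtype.subgroupComap A) fun _ _ h =>
    Subtype.ext (Subtype.ext (congrArg (fun a : A => (a : G)) h))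

lemma card_le_of_isCyclic_of_forall_pow_eq_one [IsCyclic G] {n : ℕ} (hn : 0 < n)
    (hpow : ∀ g : G, g ^ n = 1) : Nat.card G ≤ n :=
  IsCyclic.exponent_eq_card (α := G) ▸
    Nat.le_of_dvd hn (Monoid.exponent_dvd_of_forall_pow_eq_one hpow)

variable [Finite G] {p : ℕ} [hp : Fact p.Prime]

lemma prime_le_index (hG : IsPGroup p G) {H : Subgroup G} (hH : H ≠ ⊤) : p ≤ H.index := by
  obtain ⟨n, hn⟩ := hG.index H
  have hn0 : n ≠ 0 := by
    rintro rfl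
    exact hH (Subgroup.index_eq_one.mp hn)
  exact hn ▸ Nat.le_self_pow hn0 p

lemma card_mul_prime_le_card_of_lt (hG : IsPGroup p G) {H K : Subgroup G} (hHK : H < K) :
    Nat.card H * p ≤ Nat.card K := by
  rw [← Subgroup.card_mul_index (H.subgroupOf K),
    Nat.card_congr (Subgroup.subgroupOfEquivOfLe hHK.le).toEquiv]
  exact Nat.mul_le_mul_left _ (prime_le_index (hG.to_subgroup K)
    fun h => hHK.not_ge (Subgroup.subgroupOf_eq_top.mp h))

lemma lowerCentralSeries_add_eq_bot_of_card_le (hG : IsPGroup p G) {m : ℕ} (k : ℕ)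
    (hcard : Nat.card ((⊤ : Subgroup G).lowerCentralSeries k) ≤ p ^ m) :
    (⊤ : Subgroup G).lowerCentralSeries (k + m) = ⊥ := by
  have := hG.isNilpotent
  induction m generalizing k with
  | zero => exact Subgroup.eq_bot_of_card_le _ hcard
  | succ m ih =>
    rw [← add_assoc, add_right_comm]
    by_cases hle : (⊤ : Subgroup G).lowerCentralSeries k ≤
        (⊤ : Subgroup G).lowerCentralSeries (k + 1)
    · exact le_bot_iff.mp ((Subgroup.lowerCentralSeries_antitone _ (by omega)).trans_eq
        (eq_bot_of_le_commutator_top hle))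
    · have hlt := (Subgroup.lowerCentralSeries_antitone _ k.le_succ).lt_of_not_ge hle
      refine ih (k + 1) (Nat.le_of_mul_le_mul_right ?_ hp.out.pos)
      exact (card_mul_prime_le_card_of_lt hG hlt).trans (pow_succ p m ▸ hcard)

variable {f : ℕ} {A : Subgroup G} [IsCyclic A]

-- `A ⊓ γ₂` has order at most `p`, and `A ⊔ γ₂` is a proper subgroup unless `A = ⊤`.
lemma card_commutator_le (hG : IsPGroup p G) (hA : A.index ≤ p ^ f)
    (hpow : ∀ a ∈ commutator G, a ^ p = 1) : Nat.card (commutator G) ≤ p ^ f := by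
  have := hG.isNilpotent
  by_cases htop : A ⊔ commutator G = ⊤
  · have hbot : commutator G ≤ ⊥ :=
      Subgroup.Normal.commutator_le_of_self_sup_commutative_eq_top
        (bot_sup_eq A ▸ eq_top_of_sup_commutator_eq_top htop) inferInstance
    simpa [le_bot_iff.mp hbot] using Nat.one_le_pow f p hp.out.pos
  have hinf : Nat.card (A.subgroupOf (commutator G)) ≤ p := by
    have := isCyclic_subgroupOf A (commutator G)
    exact card_le_of_isCyclic_of_forall_pow_eq_one hp.out.pos fun a =>
      Subtype.ext (Subtype.ext (hpow _ a.1.2))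
  have hrel : A.relIndex (commutator G) * p ≤ p ^ f :=
    calc A.relIndex (commutator G) * p
        ≤ A.relIndex (A ⊔ commutator G) * (A ⊔ commutator G).index :=
          Nat.mul_le_mul (Subgroup.relIndex_le_of_le_right le_sup_right
            (Subgroup.index_ne_zero_of_finite (H := A.subgroupOf (A ⊔ commutator G))))
            (prime_le_index hG htop)
      _ = A.index := Subgroup.relIndex_mul_index le_sup_left
      _ ≤ p ^ f := hA
  calc Nat.card (commutator G)
      = A.relIndex (commutator G) * Nat.card (A.subgroupOf (commutator G)) := by
        rw [mul_comm]; exact (Subgroup.card_mul_index _).symm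
    _ ≤ A.relIndex (commutator G) * p := Nat.mul_le_mul_left _ hinf
    _ ≤ p ^ f := hrel

lemma lowerCentralSeries_eq_bot_of_index_le (hG : IsPGroup p G) (hA : A.index ≤ p ^ f)
    (hpow : ∀ a ∈ commutator G, a ^ p = 1) :
    (⊤ : Subgroup G).lowerCentralSeries (f + 1) = ⊥ :=
  add_comm 1 f ▸ lowerCentralSeries_add_eq_bot_of_card_le hG 1 (card_commutator_le hG hA hpow)

end CyclicSubgroupOfSmallIndex

section Regular

variable {p : ℕ} {G H : Type} [Group G] [Group H]

lemma mhoOne_le {K L : Subgroup G} : MhoOne p K ≤ L ↔ ∀ x ∈ K, x ^ p ∈ L := by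
  rw [MhoOne, Subgroup.closure_le]
  exact ⟨fun h x hx => h ⟨x, hx, rfl⟩, fun h _ ⟨x, hx, hxy⟩ => hxy ▸ h x hx⟩

lemma pow_mem_mhoOne {K : Subgroup G} {x : G} (hx : x ∈ K) : x ^ p ∈ MhoOne p K :=
  mhoOne_le.mp le_rfl x hx

lemma map_mhoOne (φ : G →* H) (K : Subgroup G) : (MhoOne p K).map φ = MhoOne p (K.map φ) := by
  rw [MhoOne, MhoOne, MonoidHom.map_closure]
  congr 1
  ext y
  simp [eq_comm]

instance (K : Subgroup G) [K.Characteristic] : (MhoOne p K).Characteristic :=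
  Subgroup.characteristic_iff_map_eq.mpr fun φ => by
    rw [map_mhoOne, Subgroup.characteristic_iff_map_eq.mp ‹_› φ]

lemma map_mhoOne_commutator_closure_pair (φ : G →* H) (x y : G) :
    (MhoOne p ⁅Subgroup.closure {x, y}, Subgroup.closure {x, y}⁆).map φ =
      MhoOne p ⁅Subgroup.closure {φ x, φ y}, Subgroup.closure {φ x, φ y}⁆ := by
  rw [map_mhoOne, Subgroup.map_commutator, MonoidHom.map_closure, Set.image_pair]

lemma IsRegularPGroup.of_injective (hH : IsRegularPGroup p H) {φ : G →* H}
    (hφ : Function.Injective φ) : IsRegularPGroup p G := fun x y => by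
  obtain ⟨z, hz, hxyz⟩ := hH (φ x) (φ y)
  rw [← map_mhoOne_commutator_closure_pair] at hz
  obtain ⟨z, hz, rfl⟩ := hz
  exact ⟨z, hz, hφ (by simpa using hxyz)⟩

lemma IsRegularPGroup.of_surjective (hG : IsRegularPGroup p G) {φ : G →* H}
    (hφ : Function.Surjective φ) : IsRegularPGroup p H := fun x y => by
  obtain ⟨x, rfl⟩ := hφ x
  obtain ⟨y, rfl⟩ := hφ y
  obtain ⟨z, hz, hxyz⟩ := hG x y
  exact ⟨φ z, map_mhoOne_commutator_closure_pair φ x y ▸ Subgroup.mem_map_of_mem φ hz,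
    by simpa using congrArg φ hxyz⟩

section CyclicSubgroup

variable [Fact p.Prime] [Finite G] {f : ℕ} {A : Subgroup G} [IsCyclic A]

lemma exists_mem_mhoOne_commutator (hG : IsPGroup p G) (hA : A.index ≤ p ^ f) (hfp : f + 1 < p)
    (x y : G) : ∃ z ∈ MhoOne p (commutator G), x ^ p * y ^ p = (x * y) ^ p * z := by
  let N := MhoOne p (commutator G)
  let A' := A.map (QuotientGroup.mk' N)
  have : IsCyclic A' := isCyclic_of_surjective _ ((QuotientGroup.mk' N).subgroupMap_surjective A)
  have hA' : A'.index ≤ p ^ f :=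
    (Nat.le_of_dvd (Nat.pos_of_ne_zero Subgroup.index_ne_zero_of_finite)
      (Subgroup.index_map_dvd A (QuotientGroup.mk'_surjective N))).trans hA
  have hpow : ∀ a ∈ commutator (G ⧸ N), a ^ p = 1 := by
    rw [← map_commutator_of_surjective (QuotientGroup.mk'_surjective N)]
    rintro _ ⟨a, ha, rfl⟩
    exact (QuotientGroup.eq_one_iff _).mpr (pow_mem_mhoOne ha)
  have hbot : (⊤ : Subgroup (G ⧸ N)).lowerCentralSeries (p - 1) = ⊥ :=
    le_bot_iff.mp <| (Subgroup.lowerCentralSeries_antitone _ (by omega)).trans_eq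
      (lowerCentralSeries_eq_bot_of_index_le (hG.to_quotient N) hA' hpow)
  refine ⟨((x * y) ^ p)⁻¹ * (x ^ p * y ^ p), QuotientGroup.eq.mp ?_, by group⟩
  exact (pow_mul_pow_eq_mul_pow_of_lowerCentralSeries_eq_bot Fact.out hbot hpow (x : G ⧸ N) y).symm

lemma isRegularPGroup_of_index_le (hG : IsPGroup p G) (hA : A.index ≤ p ^ f) (hfp : f + 1 < p) :
    IsRegularPGroup p G := fun x y => by
  let K := Subgroup.closure {x, y}
  have hx : x ∈ K := Subgroup.subset_closure (by simp)
  have hy : y ∈ K := Subgroup.subset_closure (by simp)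
  have := isCyclic_subgroupOf A K
  have hAK : (A.subgroupOf K).index ≤ p ^ f := by
    refine le_trans ?_ hA
    rw [← Subgroup.relIndex_top_right A]
    exact Subgroup.relIndex_le_of_le_right le_top
      (Subgroup.relIndex_top_right A ▸ Subgroup.index_ne_zero_of_finite)
  obtain ⟨z, hz, hxyz⟩ := exists_mem_mhoOne_commutator (hG.to_subgroup K) hAK hfp ⟨x, hx⟩ ⟨y, hy⟩
  refine ⟨z, ?_, congrArg Subtype.val hxyz⟩
  rw [← Subgroup.map_subtype_commutator, ← map_mhoOne]
  exact Subgroup.mem_map_of_mem K.subtype hz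

end CyclicSubgroup

section Omega

variable {i : ℕ}

lemma mem_omegaSubgroup_of_pow_eq_one {x : G} (hx : x ^ p ^ i = 1) : x ∈ OmegaSubgroup p G i :=
  Subgroup.subset_closure hx

lemma mem_omegaSubgroup_iff_of_mul
    (hmul : ∀ x y : G, x ^ p ^ i = 1 → y ^ p ^ i = 1 → (x * y) ^ p ^ i = 1) {x : G} :
    x ∈ OmegaSubgroup p G i ↔ x ^ p ^ i = 1 := by
  refine ⟨fun hx => ?_, mem_omegaSubgroup_of_pow_eq_one⟩
  induction hx using Subgroup.closure_induction with
  | mem _ hx => exact hx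
  | one => exact one_pow _
  | mul x y _ _ hx hy => exact hmul x y hx hy
  | inv _ _ hx => rw [inv_pow, hx, inv_one]

lemma mem_omegaSubgroup_one_iff_of_mul
    (hmul : ∀ x y : G, x ^ p = 1 → y ^ p = 1 → (x * y) ^ p = 1) {x : G} :
    x ∈ OmegaSubgroup p G 1 ↔ x ^ p = 1 := by
  simpa using mem_omegaSubgroup_iff_of_mul (i := 1) (by simpa using hmul)

lemma map_omegaSubgroup (e : G ≃* H) :
    (OmegaSubgroup p G i).map e.toMonoidHom = OmegaSubgroup p H i := by
  rw [OmegaSubgroup, OmegaSubgroup, MonoidHom.map_closure]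
  congr 1
  ext y
  constructor
  · rintro ⟨x, hx, rfl⟩
    exact (map_pow e x _).symm.trans ((congrArg e hx).trans (map_one e))
  · intro hy
    refine ⟨e.symm y, ?_, e.apply_symm_apply y⟩
    exact (map_pow e.symm y _).symm.trans ((congrArg e.symm hy).trans (map_one e.symm))

instance : (OmegaSubgroup p G i).Characteristic :=
  Subgroup.characteristic_iff_map_eq.mpr fun φ => map_omegaSubgroup φ

lemma omegaSubgroup_mono : Monotone (OmegaSubgroup p G) := fun _ _ hij =>
  Subgroup.closure_mono fun _ hx => orderOf_dvd_iff_pow_eq_one.mp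
    ((orderOf_dvd_of_pow_eq_one hx).trans (pow_dvd_pow p hij))

lemma IsRegularPGroup.mul_pow_eq_one_of_closure_pair_eq_top (hreg : IsRegularPGroup p G) {x y : G}
    (hxy : Subgroup.closure {x, y} = ⊤) {N : Subgroup G} [N.Normal] (hxN : x ∈ N)
    (hN : ∀ a ∈ N, a ^ p = 1) (hy : y ^ p = 1) : (x * y) ^ p = 1 := by
  obtain ⟨z, hz, hxyz⟩ := hreg x y
  have hmho : MhoOne p (commutator G) ≤ ⊥ :=
    mhoOne_le.mpr fun a ha => hN a (commutator_le_of_closure_pair_eq_top hxy hxN ha)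
  obtain rfl : z = 1 := hmho (by rwa [hxy] at hz)
  rwa [hN x hxN, hy, one_mul, mul_one, eq_comm] at hxyz

variable [hp : Fact p.Prime] [Finite G]

-- In a minimal counterexample `⟨x, y⟩ = G`, and `Ω₁(M)` has exponent `p` for the proper normal
-- subgroup `M = ⟨x⟩γ₂(G)`; hence it contains `γ₂(G)`, whose exponent is therefore `p`.
lemma IsRegularPGroup.mul_pow_prime_eq_one (hreg : IsRegularPGroup p G) (hG : IsPGroup p G)
    {x y : G} (hx : x ^ p = 1) (hy : y ^ p = 1) : (x * y) ^ p = 1 := by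
  induction hcard : Nat.card G using Nat.strong_induction_on generalizing G with
  | _ N ih =>
  subst hcard
  have hproper {L : Subgroup G} (hL : L ≠ ⊤) (a b : L) (ha : a ^ p = 1) (hb : b ^ p = 1) :
      (a * b) ^ p = 1 :=
    ih _ (lt_of_le_of_ne L.card_le_card_group (mt L.eq_top_of_card_eq hL))
      (hreg.of_injective L.subtype_injective) (hG.to_subgroup L) ha hb rfl
  by_cases hxy : Subgroup.closure {x, y} = ⊤
  swap
  · have hxL : x ∈ Subgroup.closure {x, y} := Subgroup.subset_closure (by simp)
    have hyL : y ∈ Subgroup.closure {x, y} := Subgroup.subset_closure (by simp)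
    exact congrArg Subtype.val
      (hproper hxy ⟨x, hxL⟩ ⟨y, hyL⟩ (Subtype.ext hx) (Subtype.ext hy))
  let M := Subgroup.zpowers x ⊔ commutator G
  have hxM : x ∈ M := Subgroup.mem_sup_left (Subgroup.mem_zpowers x)
  have : M.Normal := Subgroup.Normal.of_commutator_le G le_sup_right
  by_cases hM : M = ⊤
  · have := hG.isNilpotent
    have hyx : y ∈ Subgroup.zpowers x :=
      eq_top_of_sup_commutator_eq_top hM ▸ Subgroup.mem_top y
    obtain ⟨k, rfl⟩ := hyx
    rw [(Commute.refl x).zpow_right k |>.mul_pow, hx, hy, one_mul]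
  have hΩ {a : M} : a ∈ OmegaSubgroup p M 1 ↔ a ^ p = 1 :=
    mem_omegaSubgroup_one_iff_of_mul (hproper hM)
  refine hreg.mul_pow_eq_one_of_closure_pair_eq_top hxy
    (N := (OmegaSubgroup p M 1).map M.subtype) ?_ ?_ hy
  · exact ⟨⟨x, hxM⟩, hΩ.mpr (Subtype.ext hx), rfl⟩
  · rintro _ ⟨a, ha, rfl⟩
    exact congrArg Subtype.val (hΩ.mp ha)

namespace IsRegularPGroup

lemma mul_pow_prime_pow_eq_one (hreg : IsRegularPGroup p G) (hG : IsPGroup p G) {x y : G}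
    (hx : x ^ p ^ i = 1) (hy : y ^ p ^ i = 1) : (x * y) ^ p ^ i = 1 := by
  induction i generalizing G with
  | zero => simp_all
  | succ i ih =>
    have hmem (a : G) : (a : G ⧸ OmegaSubgroup p G 1) ^ p ^ i = 1 ↔ a ^ p ^ (i + 1) = 1 := by
      rw [← QuotientGroup.mk_pow, QuotientGroup.eq_one_iff, pow_succ, pow_mul]
      exact mem_omegaSubgroup_one_iff_of_mul fun _ _ => hreg.mul_pow_prime_eq_one hG
    rw [← hmem] at hx hy ⊢
    exact ih (hreg.of_surjective (QuotientGroup.mk'_surjective _)) (hG.to_quotient _) hx hy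

lemma mem_omegaSubgroup_iff (hreg : IsRegularPGroup p G) (hG : IsPGroup p G) {x : G} :
    x ∈ OmegaSubgroup p G i ↔ x ^ p ^ i = 1 :=
  mem_omegaSubgroup_iff_of_mul fun _ _ => hreg.mul_pow_prime_pow_eq_one hG

end IsRegularPGroup

end Omega

end Regular

section TypeInvariants

variable {p a i : ℕ} {G : Type} [Group G]

lemma omegaSubgroup_eq_top (he : Monoid.exponent G = p ^ a) (hai : a ≤ i) :
    OmegaSubgroup p G i = ⊤ :=
  eq_top_iff.mpr fun x _ => omegaSubgroup_mono hai
    (mem_omegaSubgroup_of_pow_eq_one (he ▸ Monoid.pow_exponent_eq_one x))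

lemma omegaSubgroup_zero : OmegaSubgroup p G 0 = ⊥ := by
  simp [OmegaSubgroup, Subgroup.closure_singleton_one]

lemma omegaInv_eq_zero (he : Monoid.exponent G = p ^ a) (hai : a < i) : omegaInv p G i = 0 := by
  simp [omegaInv, omegaSubgroup_eq_top he (Nat.le_sub_one_of_lt hai)]

lemma muInv_succ (he : Monoid.exponent G = p ^ a) (j : ℕ) :
    muInv p G (j + 1) = ((Finset.Icc 1 a).filter fun i => j < omegaInv p G i).card := by
  refine Nat.subtype_card _ fun i => ?_
  rw [Finset.mem_filter, Finset.mem_Icc, Nat.succ_le_iff]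
  refine ⟨fun h => ⟨h.1.1, h.2⟩, fun h => ⟨⟨h.1, ?_⟩, h.2⟩⟩
  by_contra! hai
  exact absurd (omegaInv_eq_zero he hai) (Nat.ne_zero_of_lt h.2)

lemma muInv_succ_antitone (he : Monoid.exponent G = p ^ a) :
    Antitone fun j => muInv p G (j + 1) := fun j k hjk => by
  simp only [muInv_succ he]
  exact Finset.card_le_card (Finset.monotone_filter_right _ fun _ _ hk => hjk.trans_lt hk)

section

variable [hp : Fact p.Prime] [Finite G]

lemma pow_omegaInv (hG : IsPGroup p G) (i : ℕ) :
    p ^ omegaInv p G i = (OmegaSubgroup p G (i - 1)).relIndex (OmegaSubgroup p G i) := by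
  obtain ⟨k, hk⟩ := (hG.to_subgroup (OmegaSubgroup p G i)).index
    ((OmegaSubgroup p G (i - 1)).subgroupOf (OmegaSubgroup p G i))
  rw [omegaInv, Subgroup.relIndex, hk, hp.out.factorization_pow, Finsupp.single_eq_same]

lemma pow_sum_omegaInv (hG : IsPGroup p G) (m : ℕ) :
    p ^ ∑ i ∈ Finset.Icc 1 m, omegaInv p G i = Nat.card (OmegaSubgroup p G m) := by
  induction m with
  | zero => simp [omegaSubgroup_zero]
  | succ m ih =>
    rw [Finset.sum_Icc_succ_top (Nat.le_add_left 1 m), pow_add, ih, pow_omegaInv hG,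
      Nat.add_sub_cancel, ← Subgroup.relIndex_bot_left, ← Subgroup.relIndex_bot_left]
    exact Subgroup.relIndex_mul_relIndex _ _ _ bot_le (omegaSubgroup_mono m.le_succ)

end

variable [hp : Fact p.Prime] {n : ℕ}

lemma sum_omegaInv (hcard : Nat.card G = p ^ n) (he : Monoid.exponent G = p ^ a) :
    ∑ i ∈ Finset.Icc 1 a, omegaInv p G i = n := by
  have : Finite G := Nat.finite_of_card_ne_zero (hcard ▸ (pow_pos hp.out.pos n).ne')
  refine Nat.pow_right_injective hp.out.two_le ?_
  exact (pow_sum_omegaInv (IsPGroup.of_card hcard) a).trans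
    (by rw [omegaSubgroup_eq_top he le_rfl, Subgroup.card_top, hcard])

lemma sum_muInv (hcard : Nat.card G = p ^ n) (he : Monoid.exponent G = p ^ a) {J : ℕ}
    (hJ : n ≤ J) : ∑ j ∈ Finset.range J, muInv p G (j + 1) = n := by
  have hfilter {i : ℕ} (hi : i ∈ Finset.Icc 1 a) :
      (Finset.range J).filter (· < omegaInv p G i) = Finset.range (omegaInv p G i) := by
    have hle : omegaInv p G i ≤ n := by
      rw [← sum_omegaInv hcard he]
      exact Finset.single_le_sum (fun _ _ => Nat.zero_le _) hi
    ext j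
    simp only [Finset.mem_filter, Finset.mem_range]
    omega
  calc ∑ j ∈ Finset.range J, muInv p G (j + 1)
      = ∑ j ∈ Finset.range J, ((Finset.Icc 1 a).filter fun i => j < omegaInv p G i).card :=
        Finset.sum_congr rfl fun j _ => muInv_succ he j
    _ = ∑ i ∈ Finset.Icc 1 a, ((Finset.range J).filter (· < omegaInv p G i)).card :=
        Finset.sum_card_bipartiteAbove_eq_sum_card_bipartiteBelow _
    _ = ∑ i ∈ Finset.Icc 1 a, omegaInv p G i :=
        Finset.sum_congr rfl fun i hi => by rw [hfilter hi, Finset.card_range]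
    _ = n := sum_omegaInv hcard he

lemma exists_orderOf_eq_pow (he : Monoid.exponent G = p ^ a) : ∃ g : G, orderOf g = p ^ a := by
  obtain ⟨g, hg⟩ := hp.out.exists_orderOf_eq_pow_factorization_exponent G
  exact ⟨g, by rw [hg, he, hp.out.factorization_pow, Finsupp.single_eq_same]⟩

variable [Finite G]

namespace IsRegularPGroup

lemma omegaInv_pos (hreg : IsRegularPGroup p G) (hG : IsPGroup p G)
    (he : Monoid.exponent G = p ^ a) (hi : i ∈ Finset.Icc 1 a) : 0 < omegaInv p G i := by
  obtain ⟨h1i, hia⟩ := Finset.mem_Icc.mp hi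
  obtain ⟨g, hg⟩ := exists_orderOf_eq_pow he
  have hmem {j : ℕ} : g ^ p ^ (a - i) ∈ OmegaSubgroup p G j ↔ i ≤ j := by
    rw [hreg.mem_omegaSubgroup_iff hG, ← pow_mul, ← pow_add, ← orderOf_dvd_iff_pow_eq_one, hg,
      Nat.pow_dvd_pow_iff_le_right hp.out.one_lt]
    omega
  by_contra! h0
  have hindex := pow_omegaInv hG i
  rw [Nat.le_zero.mp h0, pow_zero, eq_comm, Subgroup.relIndex_eq_one] at hindex
  have := hmem.mp (hindex (hmem.mpr le_rfl))
  omega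

lemma muInv_one (hreg : IsRegularPGroup p G) (hG : IsPGroup p G)
    (he : Monoid.exponent G = p ^ a) : muInv p G 1 = a := by
  rw [← zero_add 1, muInv_succ he, Finset.filter_true_of_mem fun _ => hreg.omegaInv_pos hG he,
    Nat.card_Icc, Nat.add_sub_cancel]

end IsRegularPGroup

end TypeInvariants

section Invariance

variable {p : ℕ} {G H : Type} [Group G] [Group H]

lemma omegaInv_congr (e : G ≃* H) (i : ℕ) : omegaInv p G i = omegaInv p H i := by
  rw [omegaInv, omegaInv, ← map_omegaSubgroup e, ← map_omegaSubgroup e,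
    Subgroup.relIndex_map_map_of_injective _ _ e.injective]

lemma muInv_congr (e : G ≃* H) (j : ℕ) : muInv p G j = muInv p H j := by
  simp only [muInv, omegaInv_congr e]

end Invariance

section Partition

lemma eq_of_forall_getD_eq : ∀ {l l' : List ℕ}, (∀ x ∈ l, 0 < x) → (∀ x ∈ l', 0 < x) →
    (∀ i, l.getD i 0 = l'.getD i 0) → l = l'
  | [], [], _, _, _ => rfl
  | [], b :: _, _, hl', h => absurd (h 0) (hl' b List.mem_cons_self).ne
  | a :: _, [], hl, _, h => absurd (h 0) (hl a List.mem_cons_self).ne'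
  | a :: l, b :: l', hl, hl', h => by
    rw [List.forall_mem_cons] at hl hl'
    exact congrArg₂ List.cons (h 0) (eq_of_forall_getD_eq hl.2 hl'.2 fun i => h (i + 1))

/-- The parts of a partition of `f` in non-increasing order, the form in which the type invariants
of a group are listed. -/
def sortedParts {f : ℕ} (P : f.Partition) : List ℕ :=
  (P.parts.sort (· ≤ ·)).reverse

variable {f : ℕ}

lemma coe_sortedParts (P : f.Partition) : (sortedParts P : Multiset ℕ) = P.parts := by
  rw [sortedParts, Multiset.coe_reverse, Multiset.sort_eq]

lemma sum_sortedParts (P : f.Partition) : (sortedParts P).sum = f := by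
  rw [← Multiset.sum_coe, coe_sortedParts, P.parts_sum]

lemma pos_of_mem_sortedParts (P : f.Partition) {i : ℕ} (hi : i ∈ sortedParts P) : 0 < i :=
  P.parts_pos (coe_sortedParts P ▸ Multiset.mem_coe.mpr hi)

lemma sortedParts_eq_of_parts_eq {P : f.Partition} {l : List ℕ} (hl : l.SortedGE)
    (hP : P.parts = l) : sortedParts P = l := by
  have hrev : P.parts.sort (· ≤ ·) = l.reverse := by
    refine List.Perm.eq_of_pairwise' (r := (· ≤ ·)) (Multiset.pairwise_sort _ _) ?_ ?_
    · exact List.pairwise_reverse.mpr hl.pairwise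
    · rw [← Multiset.coe_eq_coe, Multiset.sort_eq, Multiset.coe_reverse, hP]
  rw [sortedParts, hrev, List.reverse_reverse]

lemma eq_of_getD_sortedParts_eq {P P' : f.Partition}
    (h : ∀ i, (sortedParts P).getD i 0 = (sortedParts P').getD i 0) : P = P' := by
  ext1
  rw [← coe_sortedParts, ← coe_sortedParts, eq_of_forall_getD_eq (fun _ => pos_of_mem_sortedParts P)
    (fun _ => pos_of_mem_sortedParts P') h]

lemma exists_sortedParts_getD_eq {m : ℕ → ℕ} (hm : Antitone m) {N : ℕ}
    (hN : ∀ j, m j = 0 ↔ N ≤ j) :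
    ∃ P : (∑ j ∈ Finset.range N, m j).Partition, ∀ j, (sortedParts P).getD j 0 = m j := by
  let l := (List.range N).map m
  have hl : l.SortedGE := List.Pairwise.sortedGE <|
    List.pairwise_map.mpr (List.pairwise_lt_range.imp fun h => hm h.le)
  have hpos {i : ℕ} (hi : i ∈ (l : Multiset ℕ)) : 0 < i := by
    obtain ⟨j, hj, rfl⟩ := List.mem_map.mp (Multiset.mem_coe.mp hi)
    exact Nat.pos_of_ne_zero ((hN j).not.mpr (List.mem_range.mp hj).not_ge)
  refine ⟨⟨l, hpos, Multiset.sum_coe l⟩, fun j => ?_⟩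
  rw [sortedParts_eq_of_parts_eq hl rfl]
  rcases lt_or_ge j N with hj | hj
  · simp [l, List.getD_eq_getElem?_getD, hj]
  · simp [l, List.getD_eq_getElem?_getD, hj, (hN j).mpr hj]

lemma exists_sortedParts_getD_eq_of_sum_eq {m : ℕ → ℕ} (hm : Antitone m) {J : ℕ}
    (hsum : ∀ K ≥ J, ∑ j ∈ Finset.range K, m j = f) :
    ∃ P : f.Partition, ∀ j, (sortedParts P).getD j 0 = m j := by
  have hex : ∃ j, m j = 0 :=
    ⟨J, by simpa [Finset.sum_range_succ, hsum J le_rfl] using hsum (J + 1) J.le_succ⟩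
  have hN (j : ℕ) : m j = 0 ↔ Nat.find hex ≤ j :=
    ⟨fun hj => Nat.find_min' hex hj,
      fun hj => Nat.le_zero.mp ((hm hj).trans_eq (Nat.find_spec hex))⟩
  have hf : ∑ j ∈ Finset.range (Nat.find hex), m j = f := by
    rw [← hsum _ (le_max_left J (Nat.find hex))]
    refine Finset.sum_subset (Finset.range_mono (le_max_right _ _)) fun j _ hj => ?_
    exact (hN j).mpr (by simpa using hj)
  exact hf ▸ exists_sortedParts_getD_eq hm hN

end Partition

section Counting

lemma card_quot_subtype_exists {α ι : Type*} [Finite α] [Fintype ι] (r : α → α → Prop)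
    (hrefl : ∀ a, r a a) (S : ι → α → Prop)
    (hS : ∀ {i j a b}, S i a → S j b → r a b → i = j) :
    Nat.card (Quot fun a b : {a // ∃ i, S i a} => r a.1 b.1) =
      ∑ i, Nat.card (Quot fun a b : {a // S i a} => r a.1 b.1) := by
  rw [← Nat.card_sigma]
  have hmk {i j : ι} {a b : α} (ha : S i a) (hb : S j b) (hab : r a b) :
      (⟨i, Quot.mk _ ⟨a, ha⟩⟩ : Σ i, Quot fun a b : {a // S i a} => r a.1 b.1) =
        ⟨j, Quot.mk _ ⟨b, hb⟩⟩ := by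
    obtain rfl := hS ha hb hab
    exact congrArg (Sigma.mk i) (Quot.sound hab)
  refine Nat.card_congr ⟨Quot.lift
      (fun a : {a // ∃ i, S i a} => ⟨a.2.choose, Quot.mk _ ⟨a, a.2.choose_spec⟩⟩)
      fun a b => hmk a.2.choose_spec b.2.choose_spec,
    fun x => Quot.map (fun a : {a // S x.1 a} => ⟨a, x.1, a.2⟩) (fun _ _ => id) x.2, ?_, ?_⟩
  · rintro ⟨a⟩
    rfl
  · rintro ⟨i, ⟨a⟩⟩
    exact hmk _ _ (hrefl a)

instance {α : Type*} [Finite α] : Finite (Group α) :=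
  Finite.of_injective (fun s : Group α => s.mul) fun _ _ h => Group.ext h

variable {p n e f : ℕ}

lemma groupClassCount_exists {N : ℕ} {ι : Type*} [Fintype ι] (S : ι → Group (Fin N) → Prop)
    (hS : ∀ {i j s t}, S i s → S j t →
      Nonempty (@MulEquiv (Fin N) (Fin N) (mulOfGroup _ s) (mulOfGroup _ t)) → i = j) :
    groupClassCount N (fun s => ∃ i, S i s) = ∑ i, groupClassCount N (S i) :=
  card_quot_subtype_exists _ (fun s => ⟨@MulEquiv.refl _ (mulOfGroup _ s)⟩) S hS

lemma psiType_eq_groupClassCount {l : List ℕ} (h : e + l.sum = n) :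
    PsiType p e l = groupClassCount (p ^ n) fun s =>
      letI := s
      IsRegularPGroup p (Fin (p ^ n)) ∧ HasTypeInvariants p (Fin (p ^ n)) (e :: l) := by
  subst h
  rfl

end Counting

section Coexponent

variable {p n a f : ℕ} {G : Type} [Group G]

lemma hasTypeInvariants_cons_iff {l : List ℕ} : HasTypeInvariants p G (a :: l) ↔
    muInv p G 1 = a ∧ ∀ j, muInv p G (j + 1 + 1) = l.getD j 0 :=
  ⟨fun h => ⟨h 0, fun j => h (j + 1)⟩, fun h j => j.casesOn h.1 h.2⟩

lemma HasTypeInvariants.eq_of_mulEquiv {H : Type} [Group H] (φ : G ≃* H) {P P' : f.Partition}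
    (hG : HasTypeInvariants p G (a :: sortedParts P))
    (hH : HasTypeInvariants p H (a :: sortedParts P')) : P = P' := by
  rw [hasTypeInvariants_cons_iff] at hG hH
  exact eq_of_getD_sortedParts_eq fun j => by rw [← hG.2, ← hH.2, muInv_congr φ]

variable [hp : Fact p.Prime]

lemma isRegularPGroup_of_exponent_eq (hcard : Nat.card G = p ^ n)
    (he : Monoid.exponent G = p ^ a) (hp' : n - a + 1 < p) : IsRegularPGroup p G := by
  have : Finite G := Nat.finite_of_card_ne_zero (hcard ▸ (pow_pos hp.out.pos n).ne')
  obtain ⟨g, hg⟩ := exists_orderOf_eq_pow he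
  refine isRegularPGroup_of_index_le (A := Subgroup.zpowers g) (IsPGroup.of_card hcard) ?_ hp'
  have hindex := Subgroup.card_mul_index (Subgroup.zpowers g)
  rw [Nat.card_zpowers, hg, hcard] at hindex
  refine Nat.le_of_mul_le_mul_left (c := p ^ a) ?_ (pow_pos hp.out.pos a)
  rw [hindex, ← pow_add]
  exact Nat.pow_le_pow_right hp.out.pos (by omega)

lemma IsRegularPGroup.exists_hasTypeInvariants (hreg : IsRegularPGroup p G)
    (hcard : Nat.card G = p ^ n) (he : Monoid.exponent G = p ^ a) :
    ∃ P : (n - a).Partition, HasTypeInvariants p G (a :: sortedParts P) := by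
  have : Finite G := Nat.finite_of_card_ne_zero (hcard ▸ (pow_pos hp.out.pos n).ne')
  have hone : muInv p G 1 = a := hreg.muInv_one (IsPGroup.of_card hcard) he
  have hanti : Antitone fun j => muInv p G (j + 1 + 1) :=
    fun i j hij => muInv_succ_antitone he (Nat.succ_le_succ hij)
  have hsum (K : ℕ) (hK : K ≥ n) : ∑ j ∈ Finset.range K, muInv p G (j + 1 + 1) = n - a := by
    have := sum_muInv hcard he (hK.le.trans K.le_succ)
    rw [Finset.sum_range_succ', hone] at this
    exact Nat.eq_sub_of_add_eq this
  obtain ⟨P, hP⟩ := exists_sortedParts_getD_eq_of_sum_eq hanti hsum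
  exact ⟨P, hasTypeInvariants_cons_iff.mpr ⟨hone, fun j => (hP j).symm⟩⟩

lemma exists_exponent_eq_iff_exists_hasTypeInvariants (hcard : Nat.card G = p ^ n) (hfn : f ≤ n)
    (hfp : f + 1 < p) :
    (∃ e, Monoid.exponent G = p ^ e ∧ n - e = f) ↔
      ∃ P : f.Partition,
        IsRegularPGroup p G ∧ HasTypeInvariants p G ((n - f) :: sortedParts P) := by
  obtain ⟨a, han, ha⟩ : ∃ a ≤ n, Monoid.exponent G = p ^ a :=
    (Nat.dvd_prime_pow hp.out).mp (hcard ▸ Group.exponent_dvd_nat_card)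
  constructor
  · rintro ⟨e, he, rfl⟩
    obtain rfl : a = e := Nat.pow_right_injective hp.out.two_le (ha.symm.trans he)
    have hreg := isRegularPGroup_of_exponent_eq hcard ha hfp
    rw [Nat.sub_sub_self han]
    exact (hreg.exists_hasTypeInvariants hcard ha).imp fun _ hP => ⟨hreg, hP⟩
  · rintro ⟨P, hreg, hP⟩
    have : Finite G := Nat.finite_of_card_ne_zero (hcard ▸ (pow_pos hp.out.pos n).ne')
    have hone := hreg.muInv_one (IsPGroup.of_card hcard) ha
    rw [(hasTypeInvariants_cons_iff.mp hP).1] at hone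
    exact ⟨a, ha, by omega⟩

end Coexponent

theorem psi_coexp_eq_sum_psi_type_general (f p : ℕ) (hp : p.Prime) (hpf : f + 1 < p) (n : ℕ)
    (hn : f ≤ n) :
    PsiCoexp p n f =
      ∑ P : f.Partition, PsiType p (n - f) ((P.parts.sort (· ≤ ·)).reverse) := by
  have : Fact p.Prime := ⟨hp⟩
  let S (P : f.Partition) (s : Group (Fin (p ^ n))) : Prop :=
    letI := s
    IsRegularPGroup p (Fin (p ^ n)) ∧ HasTypeInvariants p (Fin (p ^ n)) ((n - f) :: sortedParts P)
  calc PsiCoexp p n f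
      = groupClassCount (p ^ n) fun s => ∃ P, S P s := by
        refine congrArg (groupClassCount _) (funext fun s => propext ?_)
        exact exists_exponent_eq_iff_exists_hasTypeInvariants (Nat.card_fin _) hn hpf
    _ = ∑ P, groupClassCount (p ^ n) (S P) := groupClassCount_exists S fun hs ht ⟨φ⟩ =>
        @HasTypeInvariants.eq_of_mulEquiv _ _ _ _ (_) _ (_) φ _ _ hs.2 ht.2
    _ = ∑ P : f.Partition, PsiType p (n - f) (sortedParts P) :=
        Finset.sum_congr rfl fun P _ => (psiType_eq_groupClassCount (by
          rw [sum_sortedParts, Nat.sub_add_cancel hn])).symm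

/-- Let `f ≥ 1` and `p` a prime with `p > f + 1`.  Then for every
`n ≥ 2f`, `Ψ_{n,f}^p` equals the sum over all partitions `λ = (λ_1, ..., λ_k)` of `f`
(written in non-increasing order) of `Ψ_{n-f}^p(λ_1, ..., λ_k)`. -/
theorem psi_coexp_eq_sum_psi_type (f p : ℕ) (hf : 1 ≤ f) (hp : p.Prime) (hpf : p > f + 1)
    (n : ℕ) (hn : 2 * f ≤ n) :
    PsiCoexp p n f =
      ∑ P : Nat.Partition f, PsiType p (n - f) ((P.parts.sort (· ≤ ·)).reverse) :=
  psi_coexp_eq_sum_psi_type_general f p hp hpf n (by omega)
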